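/- Let T > 0 and let σ : [0, T] × ℝ → ℝ satisfy Assumption A4 with Hölder exponent β(σ) ∈ (1/2, 1). Define q(t, x, y) = ∫₀ᵗ p(t − s, x − y) σ(s, y) ds. Then for every α with 1/2 < α < β(σ) and every λ̃ ∈ (0, 1/4) there exists a constant C such that for all t ∈ [0, T], x ∈ ℝ, and j ∈ ℤ: ‖q(t, x, ·)‖_{B^α_{2,2}([j, j+1])} ≤ C · exp(λ̃ (1 − (|x − j| − 1)²)/T). -/

import Mathlib

/-!
The whole estimate is pointwise. Write `d = max (|x - j| - 1) 0`, so that `d ≤ |x - y|` for every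
`y ∈ [j, j+1]`, and `E = exp (-lam d² / T)`. Two bounds carry the proof, with a constant `K`
independent of `t`, `x`, `j`:

* `|q(t,x,y)| ≤ K E` for `y ∈ [j, j+1]` (`abs_qFun_le`);
* `|q(t,x,y+h) - q(t,x,y)| ≤ K h^β E` for `y, y+h ∈ [j, j+1]` (`abs_qFun_sub_le`).

The second rests on the Hölder estimate `heatKernel_sub_le` for the kernel,
`|p(u,z₁) - p(u,z₂)| ≤ K u^{-(1+β)/2} |z₁ - z₂|^β E`, whose right side is integrable in `u` near `0`
because `β < 1`. It comes from scaling the Gaussian inequality `exp_neg_sq_sub_le`: the difference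
quotient of `exp (-a²)` costs a linear factor in `a`, which is absorbed by giving up the portion
`1 - 4 lam > 0` of the Gaussian exponent. The regularity of `σ` contributes the same power `h^β`.

Hence `w₂(q, r) ≤ K E r^β`, and `∫₀¹ r^{2β-2α-1} dr` converges since `α < β`. Finally `E` is at most
the exponential in the claim: if `|x - j| < 1` the latter is at least `1`.
-/


open MeasureTheory Real

/-- The one-dimensional heat kernel `p(t,x) = (1/(2√(πt))) exp(-x²/(4t))`. -/
noncomputable def heatKernel (t x : ℝ) : ℝ :=
  (1 / (2 * Real.sqrt (Real.pi * t))) * Real.exp (-(x ^ 2) / (4 * t))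

/-- The function `q(t,x,y) = ∫₀ᵗ p(t-s, x-y) σ(s,y) ds`. -/
noncomputable def qFun (σ : ℝ → ℝ → ℝ) (t x y : ℝ) : ℝ :=
  ∫ s in Set.Ioo 0 t, heatKernel (t - s) (x - y) * σ s y

/-- The modulus of continuity in `L²`:
`w₂(g, r) = sup_{0 ≤ h ≤ r} (∫_c^{d-h} |g(y+h) - g(y)|² dy)^{1/2}`. -/
noncomputable def w2 (g : ℝ → ℝ) (c d r : ℝ) : ℝ :=
  ⨆ h ∈ Set.Icc (0 : ℝ) r, (∫ y in Set.Ioc c (d - h), (g (y + h) - g y) ^ 2) ^ (1 / 2 : ℝ)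

/-- The Besov norm `‖g‖_{B^α_{2,2}([c,d])} = ‖g‖_{L²([c,d])}
  + (∫₀^{d-c} (w₂(g,r))² r^{-2α-1} dr)^{1/2}`. -/
noncomputable def besovNorm (α : ℝ) (g : ℝ → ℝ) (c d : ℝ) : ℝ :=
  (∫ y in Set.Ioc c d, (g y) ^ 2) ^ (1 / 2 : ℝ) +
    (∫ r in Set.Ioo 0 (d - c), (w2 g c d r) ^ 2 * r ^ (-2 * α - 1 : ℝ)) ^ (1 / 2 : ℝ)

/-! ### Gaussian estimates -/

/-- Hölder continuity of the Gaussian with part of its decay kept. The portion `μ` of the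
exponent is given up to absorb the linear growth of `2 * a + 1`. -/
lemma exp_neg_sq_sub_le {μ β a b : ℝ} (hμ : 0 < μ) (hβ₀ : 0 < β) (hβ₁ : β < 1)
    (ha : 0 ≤ a) (hab : a ≤ b) :
    exp (-a ^ 2) - exp (-b ^ 2) ≤ (2 + 1 / μ) * exp (-((1 - μ) * a ^ 2)) * (b - a) ^ β := by
  have hba : 0 ≤ b - a := by linarith
  have hpow : 0 ≤ (b - a) ^ β := rpow_nonneg hba _
  have h1 : 1 - exp (-(b ^ 2 - a ^ 2)) ≤ (2 * a + 1) * (b - a) ^ β := by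
    rcases le_total 1 (b - a) with h | h
    · have h2 : 1 ≤ (b - a) ^ β := one_le_rpow h hβ₀.le
      have := exp_pos (-(b ^ 2 - a ^ 2))
      nlinarith
    · have h2 : b - a ≤ (b - a) ^ β := by
        rcases hba.eq_or_lt with h0 | h0
        · rw [← h0]; exact rpow_nonneg le_rfl _
        · simpa using rpow_le_rpow_of_exponent_ge h0 h hβ₁.le
      have h3 := add_one_le_exp (-(b ^ 2 - a ^ 2))
      calc 1 - exp (-(b ^ 2 - a ^ 2)) ≤ (b - a) * (b + a) := by nlinarith
        _ ≤ (b - a) * (2 * a + 1) :=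
          mul_le_mul_of_nonneg_left (by linarith) hba
        _ ≤ (2 * a + 1) * (b - a) ^ β := by rw [mul_comm]; gcongr
  have h4 : 2 * a + 1 ≤ (2 + 1 / μ) * exp (μ * a ^ 2) := by
    have h5 := add_one_le_exp (μ * a ^ 2)
    have h6 : (0 : ℝ) < 1 / μ := by positivity
    have h7 : 1 / μ * (μ * a ^ 2) = a ^ 2 := by field_simp
    have h8 : 0 ≤ μ * a ^ 2 := by positivity
    calc 2 * a + 1 ≤ (2 + 1 / μ) * (μ * a ^ 2 + 1) := by nlinarith [sq_nonneg (a - 1)]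
      _ ≤ _ := by gcongr
  have e1 : exp (-b ^ 2) = exp (-a ^ 2) * exp (-(b ^ 2 - a ^ 2)) := by
    rw [← exp_add]; ring_nf
  have e2 : exp (-((1 - μ) * a ^ 2)) = exp (-a ^ 2) * exp (μ * a ^ 2) := by
    rw [← exp_add]; ring_nf
  rw [e1, e2]
  calc exp (-a ^ 2) - exp (-a ^ 2) * exp (-(b ^ 2 - a ^ 2))
      = exp (-a ^ 2) * (1 - exp (-(b ^ 2 - a ^ 2))) := by ring
    _ ≤ exp (-a ^ 2) * ((2 * a + 1) * (b - a) ^ β) := by gcongr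
    _ ≤ exp (-a ^ 2) * (((2 + 1 / μ) * exp (μ * a ^ 2)) * (b - a) ^ β) := by gcongr
    _ = _ := by ring

lemma heatKernel_prefactor_le {u : ℝ} (hu : 0 < u) :
    1 / (2 * √(π * u)) ≤ u ^ (-(1 / 2) : ℝ) := by
  rw [rpow_neg hu.le, ← sqrt_eq_rpow, ← one_div]
  have h : √u ≤ √(π * u) := by
    apply sqrt_le_sqrt
    nlinarith [pi_gt_three]
  have := sqrt_pos.2 hu
  gcongr
  linarith

lemma heatKernel_nonneg (u z : ℝ) : 0 ≤ heatKernel u z := by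
  unfold heatKernel; positivity

lemma exp_neg_sq_div_le {lam T u d z : ℝ} (hlam : 0 < lam)
    (hu : 0 < u) (huT : u ≤ T) (hd : 0 ≤ d) (hdz : d ≤ |z|) :
    exp (-(lam * z ^ 2 / u)) ≤ exp (-(lam * d ^ 2 / T)) := by
  have hz : d ^ 2 ≤ z ^ 2 := by rw [← sq_abs z]; gcongr
  gcongr

lemma heatKernel_le {lam T u d z : ℝ} (hlam : 0 < lam) (hlam₂ : lam < 1 / 4)
    (hu : 0 < u) (huT : u ≤ T) (hd : 0 ≤ d) (hdz : d ≤ |z|) :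
    heatKernel u z ≤ u ^ (-(1 / 2) : ℝ) * exp (-(lam * d ^ 2 / T)) := by
  unfold heatKernel
  have hp := heatKernel_prefactor_le hu
  have h1 : exp (-(z ^ 2) / (4 * u)) ≤ exp (-(lam * z ^ 2 / u)) := by
    apply exp_le_exp.2
    rw [neg_div, neg_le_neg_iff, div_le_div_iff₀ hu (by positivity)]
    nlinarith [mul_nonneg (sq_nonneg z) hu.le]
  have h2 := exp_neg_sq_div_le hlam hu huT hd hdz
  have h3 := h1.trans h2
  gcongr

/-- Hölder continuity in space of the heat kernel, with Gaussian decay and a singularity in `u`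
that is integrable at `0`. -/
lemma heatKernel_sub_le {lam T u d z₁ z₂ β : ℝ} (hlam : 0 < lam) (hlam₂ : lam < 1 / 4)
    (hβ₀ : 0 < β) (hβ₁ : β < 1)
    (hu : 0 < u) (huT : u ≤ T) (hd : 0 ≤ d) (hdz₁ : d ≤ |z₁|) (hdz₂ : d ≤ |z₂|) :
    |heatKernel u z₁ - heatKernel u z₂| ≤
      (2 + 1 / (1 - 4 * lam)) * u ^ (-((1 + β) / 2)) * |z₁ - z₂| ^ β
        * exp (-(lam * d ^ 2 / T)) := by
  -- The kernel is even and decreasing in `|z|`, so the two points may be ordered by modulus.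
  wlog h : |z₁| ≤ |z₂| generalizing z₁ z₂
  · rw [abs_sub_comm, abs_sub_comm z₁]
    exact this hdz₂ hdz₁ (le_of_not_ge h)
  have hT : 0 < T := hu.trans_le huT
  have hμ : 0 < 1 - 4 * lam := by linarith
  have hsu : 0 < √u := sqrt_pos.2 hu
  have hs2 : √u ^ 2 = u := sq_sqrt hu.le
  have hsq : ∀ z : ℝ, -(z ^ 2) / (4 * u) = -(|z| / (2 * √u)) ^ 2 := by
    intro z
    rw [div_pow, mul_pow, hs2, sq_abs]; ring
  have hmain := exp_neg_sq_sub_le (a := |z₁| / (2 * √u)) (b := |z₂| / (2 * √u)) hμ hβ₀ hβ₁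
    (by positivity) (by gcongr)
  have hexp : exp (-((1 - (1 - 4 * lam)) * (|z₁| / (2 * √u)) ^ 2)) ≤
      exp (-(lam * d ^ 2 / T)) := by
    have e : (1 - (1 - 4 * lam)) * (|z₁| / (2 * √u)) ^ 2 = lam * z₁ ^ 2 / u := by
      rw [div_pow, mul_pow, hs2, sq_abs]; field_simp; ring
    rw [e]
    exact exp_neg_sq_div_le hlam hu huT hd hdz₁
  have hpow : (|z₂| / (2 * √u) - |z₁| / (2 * √u)) ^ β ≤ |z₁ - z₂| ^ β * u ^ (-(β / 2)) := by
    have e : |z₁ - z₂| ^ β * u ^ (-(β / 2)) = (|z₁ - z₂| / √u) ^ β := by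
      rw [div_rpow (abs_nonneg _) hsu.le, sqrt_eq_rpow, ← rpow_mul hu.le, rpow_neg hu.le]
      rw [div_eq_mul_inv]; congr 3; ring
    rw [e, ← sub_div]
    apply rpow_le_rpow
    · apply div_nonneg <;> [linarith; positivity]
    · have := abs_sub_abs_le_abs_sub z₂ z₁
      rw [abs_sub_comm] at this
      have h2 : √u ≤ 2 * √u := by linarith
      gcongr
    · exact hβ₀.le
  have hmono : exp (-(|z₂| / (2 * √u)) ^ 2) ≤ exp (-(|z₁| / (2 * √u)) ^ 2) := by gcongr
  have hp := heatKernel_prefactor_le hu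
  unfold heatKernel
  rw [← mul_sub, abs_mul, abs_of_nonneg (by positivity : (0 : ℝ) ≤ 1 / (2 * √(π * u))), hsq, hsq,
    abs_of_nonneg (by linarith)]
  have hsplit : u ^ (-((1 + β) / 2)) = u ^ (-(1 / 2) : ℝ) * u ^ (-(β / 2)) := by
    rw [← rpow_add hu]; congr 1; ring
  calc 1 / (2 * √(π * u)) * (exp (-(|z₁| / (2 * √u)) ^ 2) - exp (-(|z₂| / (2 * √u)) ^ 2))
      ≤ u ^ (-(1 / 2) : ℝ) * ((2 + 1 / (1 - 4 * lam)) * exp (-(lam * d ^ 2 / T)) *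
          (|z₁ - z₂| ^ β * u ^ (-(β / 2)))) := by
        apply mul_le_mul hp _ (by linarith) (by positivity)
        refine hmain.trans ?_
        apply mul_le_mul _ hpow _ (by positivity)
        · gcongr
        · apply rpow_nonneg
          rw [← sub_div]
          apply div_nonneg <;> [linarith; positivity]
    _ = _ := by rw [hsplit]; ring

/-! ### Integration in time -/

lemma integrableOn_sub_rpow {t γ : ℝ} (ht : 0 ≤ t) (hγ : γ < 1) :
    IntegrableOn (fun s : ℝ => (t - s) ^ (-γ)) (Set.Ioo 0 t) := by
  have h := (intervalIntegral.intervalIntegrable_rpow' (a := t) (b := 0)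
    (by linarith : -1 < -γ)).comp_sub_left t
  simp only [sub_self, sub_zero] at h
  rw [intervalIntegrable_iff_integrableOn_Ioo_of_le ht] at h
  exact h

lemma setIntegral_sub_rpow_le {t T γ : ℝ} (ht : 0 ≤ t) (htT : t ≤ T) (hγ : γ < 1) :
    ∫ s in Set.Ioo 0 t, (t - s) ^ (-γ) ≤ T ^ (1 - γ) / (1 - γ) := by
  have h0 : 0 < 1 - γ := by linarith
  rw [← integral_Ioc_eq_integral_Ioo, ← intervalIntegral.integral_of_le ht,
    intervalIntegral.integral_comp_sub_left (fun u : ℝ => u ^ (-γ)) t]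
  rw [integral_rpow (Or.inl (by linarith)), sub_self, sub_zero,
    show -γ + 1 = 1 - γ by ring, zero_rpow h0.ne', sub_zero]
  gcongr

lemma qFun_integrand_le {T Cσ lam t s x y d : ℝ} {σ : ℝ → ℝ → ℝ}
    (hσ_bdd : ∀ s ∈ Set.Icc (0 : ℝ) T, ∀ y : ℝ, |σ s y| ≤ Cσ)
    (hlam : 0 < lam) (hlam₂ : lam < 1 / 4) (ht : t ≤ T) (hs : s ∈ Set.Ioo 0 t)
    (hd : 0 ≤ d) (hdy : d ≤ |x - y|) :
    |heatKernel (t - s) (x - y) * σ s y| ≤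
      Cσ * exp (-(lam * d ^ 2 / T)) * (t - s) ^ (-(1 / 2) : ℝ) := by
  have hσ := hσ_bdd s ⟨hs.1.le, hs.2.le.trans ht⟩ y
  have hC : 0 ≤ Cσ := (abs_nonneg _).trans hσ
  have hk := heatKernel_le hlam hlam₂ (sub_pos.2 hs.2) (by linarith [hs.1] : t - s ≤ T) hd hdy
  rw [abs_mul, abs_of_nonneg (heatKernel_nonneg _ _)]
  calc heatKernel (t - s) (x - y) * |σ s y|
      ≤ ((t - s) ^ (-(1 / 2) : ℝ) * exp (-(lam * d ^ 2 / T))) * Cσ := by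
        apply mul_le_mul hk hσ (abs_nonneg _)
        exact (heatKernel_nonneg _ _).trans hk
    _ = _ := by ring

lemma integrableOn_qFun_integrand {T Cσ lam t x y : ℝ} {σ : ℝ → ℝ → ℝ}
    (hσ_meas : Measurable (Function.uncurry σ))
    (hσ_bdd : ∀ s ∈ Set.Icc (0 : ℝ) T, ∀ y : ℝ, |σ s y| ≤ Cσ)
    (hlam : 0 < lam) (hlam₂ : lam < 1 / 4) (ht₀ : 0 ≤ t) (ht : t ≤ T) :
    IntegrableOn (fun s => heatKernel (t - s) (x - y) * σ s y) (Set.Ioo 0 t) := by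
  have hm : Measurable (fun s => heatKernel (t - s) (x - y) * σ s y) := by
    have h1 : Measurable (fun s => σ s y) :=
      hσ_meas.comp (measurable_id.prodMk measurable_const)
    have h2 : Measurable (fun s => heatKernel (t - s) (x - y)) := by
      unfold heatKernel; fun_prop
    exact h2.mul h1
  refine Integrable.mono' (((integrableOn_sub_rpow (γ := 1 / 2) ht₀ (by norm_num)).const_mul
    (Cσ * exp (-(lam * 0 ^ 2 / T))))) hm.aestronglyMeasurable ?_
  filter_upwards [ae_restrict_mem measurableSet_Ioo] with s hs
  exact qFun_integrand_le hσ_bdd hlam hlam₂ ht hs le_rfl (abs_nonneg _)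

lemma abs_qFun_le {T Cσ lam t x y d : ℝ} {σ : ℝ → ℝ → ℝ}
    (hσ_bdd : ∀ s ∈ Set.Icc (0 : ℝ) T, ∀ y : ℝ, |σ s y| ≤ Cσ) (hC : 0 ≤ Cσ)
    (hlam : 0 < lam) (hlam₂ : lam < 1 / 4) (ht₀ : 0 ≤ t) (ht : t ≤ T)
    (hd : 0 ≤ d) (hdy : d ≤ |x - y|) :
    |qFun σ t x y| ≤
      Cσ * (T ^ (1 - 1 / 2 : ℝ) / (1 - 1 / 2)) * exp (-(lam * d ^ 2 / T)) := by
  unfold qFun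
  calc |∫ s in Set.Ioo 0 t, heatKernel (t - s) (x - y) * σ s y|
      ≤ ∫ s in Set.Ioo 0 t, Cσ * exp (-(lam * d ^ 2 / T)) * (t - s) ^ (-(1 / 2) : ℝ) := by
        refine norm_integral_le_of_norm_le (f := fun s => heatKernel (t - s) (x - y) * σ s y)
          ((integrableOn_sub_rpow ht₀ (by norm_num)).const_mul _) ?_
        filter_upwards [ae_restrict_mem measurableSet_Ioo] with s hs
        exact qFun_integrand_le hσ_bdd hlam hlam₂ ht hs hd hdy
    _ = Cσ * exp (-(lam * d ^ 2 / T)) * ∫ s in Set.Ioo 0 t, (t - s) ^ (-(1 / 2) : ℝ) :=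
        integral_const_mul _ _
    _ ≤ Cσ * exp (-(lam * d ^ 2 / T)) * (T ^ (1 - 1 / 2 : ℝ) / (1 - 1 / 2)) := by
        gcongr
        exact setIntegral_sub_rpow_le ht₀ ht (by norm_num)
    _ = _ := by ring

lemma abs_qFun_sub_le {T Cσ Lσ β lam t x y₁ y₂ d : ℝ} {σ : ℝ → ℝ → ℝ}
    (hσ_meas : Measurable (Function.uncurry σ))
    (hσ_bdd : ∀ s ∈ Set.Icc (0 : ℝ) T, ∀ y : ℝ, |σ s y| ≤ Cσ) (hC : 0 ≤ Cσ)
    (hσ_hold : ∀ s ∈ Set.Icc (0 : ℝ) T, ∀ y₁ y₂ : ℝ, |σ s y₁ - σ s y₂| ≤ Lσ * |y₁ - y₂| ^ β)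
    (hβ₀ : 0 < β) (hβ₁ : β < 1)
    (hlam : 0 < lam) (hlam₂ : lam < 1 / 4) (ht₀ : 0 ≤ t) (ht : t ≤ T)
    (hd : 0 ≤ d) (hdy₁ : d ≤ |x - y₁|) (hdy₂ : d ≤ |x - y₂|) :
    |qFun σ t x y₁ - qFun σ t x y₂| ≤
      (Cσ * (2 + 1 / (1 - 4 * lam)) * (T ^ (1 - (1 + β) / 2) / (1 - (1 + β) / 2))
        + |Lσ| * (T ^ (1 - 1 / 2 : ℝ) / (1 - 1 / 2)))
      * |y₁ - y₂| ^ β * exp (-(lam * d ^ 2 / T)) := by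
  set E := exp (-(lam * d ^ 2 / T)) with hE
  set H := |y₁ - y₂| ^ β with hH
  set K := 2 + 1 / (1 - 4 * lam) with hK
  have hE0 : 0 ≤ E := (exp_pos _).le
  have hH0 : 0 ≤ H := rpow_nonneg (abs_nonneg _) _
  have hμ : 0 < 1 - 4 * lam := by linarith
  have hK0 : 0 ≤ K := by positivity
  have i1 := integrableOn_sub_rpow (γ := (1 + β) / 2) ht₀ (by linarith)
  have i2 := integrableOn_sub_rpow (γ := 1 / 2) ht₀ (by norm_num)
  unfold qFun
  rw [← integral_sub (integrableOn_qFun_integrand hσ_meas hσ_bdd hlam hlam₂ ht₀ ht)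
    (integrableOn_qFun_integrand hσ_meas hσ_bdd hlam hlam₂ ht₀ ht)]
  calc |∫ s in Set.Ioo 0 t, (heatKernel (t - s) (x - y₁) * σ s y₁
          - heatKernel (t - s) (x - y₂) * σ s y₂)|
      ≤ ∫ s in Set.Ioo 0 t, (Cσ * K * H * E * (t - s) ^ (-((1 + β) / 2))
          + |Lσ| * H * E * (t - s) ^ (-(1 / 2) : ℝ)) := by
        refine norm_integral_le_of_norm_le (f := fun s => heatKernel (t - s) (x - y₁) * σ s y₁
          - heatKernel (t - s) (x - y₂) * σ s y₂)
          ((i1.const_mul _).add (i2.const_mul _)) ?_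
        filter_upwards [ae_restrict_mem measurableSet_Ioo] with s hs
        have hsT : s ∈ Set.Icc (0 : ℝ) T := ⟨hs.1.le, hs.2.le.trans ht⟩
        have hu : 0 < t - s := sub_pos.2 hs.2
        have huT : t - s ≤ T := by linarith [hs.1]
        have k1 := heatKernel_sub_le hlam hlam₂ hβ₀ hβ₁ hu huT hd hdy₁ hdy₂
        rw [sub_sub_sub_cancel_left, abs_sub_comm y₂ y₁] at k1
        have k2 := heatKernel_le hlam hlam₂ hu huT hd hdy₂
        have k3 := hσ_bdd s hsT y₁
        have k4 : |σ s y₁ - σ s y₂| ≤ |Lσ| * H :=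
          (hσ_hold s hsT y₁ y₂).trans (by gcongr; exact le_abs_self _)
        have e : heatKernel (t - s) (x - y₁) * σ s y₁ - heatKernel (t - s) (x - y₂) * σ s y₂
            = (heatKernel (t - s) (x - y₁) - heatKernel (t - s) (x - y₂)) * σ s y₁
              + heatKernel (t - s) (x - y₂) * (σ s y₁ - σ s y₂) := by ring
        rw [norm_eq_abs, e]
        refine (abs_add_le _ _).trans ?_
        rw [abs_mul, abs_mul, abs_of_nonneg (heatKernel_nonneg (t - s) (x - y₂))]
        have m1 := mul_le_mul k1 k3 (abs_nonneg _) ((abs_nonneg _).trans k1)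
        have m2 := mul_le_mul k2 k4 (abs_nonneg _) ((heatKernel_nonneg _ _).trans k2)
        refine (add_le_add m1 m2).trans (le_of_eq ?_)
        ring
    _ = Cσ * K * H * E * (∫ s in Set.Ioo 0 t, (t - s) ^ (-((1 + β) / 2)))
          + |Lσ| * H * E * ∫ s in Set.Ioo 0 t, (t - s) ^ (-(1 / 2) : ℝ) := by
        rw [integral_add (i1.const_mul _) (i2.const_mul _), integral_const_mul,
          integral_const_mul]
    _ ≤ Cσ * K * H * E * (T ^ (1 - (1 + β) / 2) / (1 - (1 + β) / 2))
          + |Lσ| * H * E * (T ^ (1 - 1 / 2 : ℝ) / (1 - 1 / 2)) := by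
        gcongr
        · exact setIntegral_sub_rpow_le ht₀ ht (by linarith)
        · exact setIntegral_sub_rpow_le ht₀ ht (by norm_num)
    _ = _ := by ring

/-! ### The Besov norm of a bounded Hölder function -/

lemma sqrt_setIntegral_sq_le {f : ℝ → ℝ} {c d M : ℝ} (hM : 0 ≤ M) (hcd : d ≤ c + 1)
    (hf : ∀ y ∈ Set.Ioc c d, |f y| ≤ M) :
    (∫ y in Set.Ioc c d, (f y) ^ 2) ^ (1 / 2 : ℝ) ≤ M := by
  have h : ∫ y in Set.Ioc c d, (f y) ^ 2 ≤ M ^ 2 := by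
    have h1 := norm_setIntegral_le_of_norm_le_const (μ := volume) (s := Set.Ioc c d)
      (f := fun y => (f y) ^ 2) (C := M ^ 2) (by simp) (fun y hy => by
        rw [norm_eq_abs, abs_pow]
        exact pow_le_pow_left₀ (abs_nonneg _) (hf y hy) 2)
    refine (le_abs_self _).trans (h1.trans ?_)
    have h2 : volume.real (Set.Ioc c d) ≤ 1 := by
      rw [Real.volume_real_Ioc]
      exact max_le (by linarith) zero_le_one
    nlinarith [sq_nonneg M]
  rw [← sqrt_eq_rpow]
  exact sqrt_le_iff.2 ⟨hM, h⟩

lemma w2_nonneg (g : ℝ → ℝ) (c d r : ℝ) : 0 ≤ w2 g c d r :=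
  iSup_nonneg fun _ => iSup_nonneg fun _ =>
    rpow_nonneg (integral_nonneg fun _ => sq_nonneg _) _

lemma besovNorm_le_of_holder {g : ℝ → ℝ} {c α β M₀ M₁ : ℝ} (hβ₀ : 0 < β) (hαβ : α < β)
    (hM₀ : 0 ≤ M₀) (hM₁ : 0 ≤ M₁) (h₀ : ∀ y ∈ Set.Icc c (c + 1), |g y| ≤ M₀)
    (h₁ : ∀ y₁ ∈ Set.Icc c (c + 1), ∀ y₂ ∈ Set.Icc c (c + 1),
      |g y₁ - g y₂| ≤ M₁ * |y₁ - y₂| ^ β) :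
    besovNorm α g c (c + 1) ≤ M₀ + M₁ * √(1 / (2 * (β - α))) := by
  have hw : ∀ r, 0 ≤ r → w2 g c (c + 1) r ≤ M₁ * r ^ β := by
    intro r hr
    have hb : 0 ≤ M₁ * r ^ β := mul_nonneg hM₁ (rpow_nonneg hr _)
    refine Real.iSup_le (fun h => Real.iSup_le (fun hh => ?_) hb) hb
    have hh0 : 0 ≤ h := hh.1
    refine sqrt_setIntegral_sq_le hb (by linarith) fun y hy => ?_
    refine (h₁ (y + h) ⟨by linarith [hy.1], by linarith [hy.2]⟩ y
      ⟨hy.1.le, by linarith [hy.2]⟩).trans ?_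
    rw [add_sub_cancel_left, abs_of_nonneg hh0]
    have := rpow_le_rpow hh0 hh.2 hβ₀.le
    gcongr
  have hγ : -1 < 2 * (β - α) - 1 := by linarith
  have hint : IntegrableOn (fun r : ℝ => r ^ (2 * (β - α) - 1)) (Set.Ioo 0 1) := by
    rw [← intervalIntegrable_iff_integrableOn_Ioo_of_le zero_le_one]
    exact intervalIntegral.intervalIntegrable_rpow' hγ
  have hval : ∫ r in Set.Ioo (0 : ℝ) 1, r ^ (2 * (β - α) - 1) = 1 / (2 * (β - α)) := by
    rw [← integral_Ioc_eq_integral_Ioo, ← intervalIntegral.integral_of_le zero_le_one,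
      integral_rpow (Or.inl hγ), sub_add_cancel, one_rpow, zero_rpow (by linarith), sub_zero]
  have hI : ∫ r in Set.Ioo (0 : ℝ) 1, (w2 g c (c + 1) r) ^ 2 * r ^ (-2 * α - 1 : ℝ)
      ≤ M₁ ^ 2 * (1 / (2 * (β - α))) := by
    rw [← hval, ← integral_const_mul]
    refine integral_mono_of_nonneg ?_ (hint.const_mul _) ?_
    · filter_upwards [ae_restrict_mem measurableSet_Ioo] with r hr
      exact mul_nonneg (sq_nonneg _) (rpow_nonneg hr.1.le _)
    · filter_upwards [ae_restrict_mem measurableSet_Ioo] with r hr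
      have hr0 : 0 < r := hr.1
      have e : r ^ (2 * (β - α) - 1) = (r ^ β) ^ 2 * r ^ (-2 * α - 1 : ℝ) := by
        rw [← rpow_natCast, ← rpow_mul hr0.le, ← rpow_add hr0]
        congr 1; push_cast; ring
      have h2 := pow_le_pow_left₀ (w2_nonneg g c (c + 1) r) (hw r hr0.le) 2
      calc (w2 g c (c + 1) r) ^ 2 * r ^ (-2 * α - 1 : ℝ)
          ≤ (M₁ * r ^ β) ^ 2 * r ^ (-2 * α - 1 : ℝ) := by gcongr
        _ = M₁ ^ 2 * r ^ (2 * (β - α) - 1) := by rw [e]; ring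
  unfold besovNorm
  rw [add_sub_cancel_left]
  refine add_le_add
    (sqrt_setIntegral_sq_le hM₀ le_rfl fun y hy => h₀ y ⟨hy.1.le, hy.2⟩) ?_
  rw [← sqrt_eq_rpow]
  refine (sqrt_le_sqrt hI).trans (le_of_eq ?_)
  rw [sqrt_mul (sq_nonneg _), sqrt_sq hM₁]

/-! ### Conclusion -/

/-- Under Assumption A4 on `σ`, for every `α` with `1/2 < α < β(σ)` and every
`λ̃ ∈ (0,1/4)` there is a constant `C > 0` such that for all `t ∈ [0,T]`, `x ∈ ℝ`
and `j ∈ ℤ`: `‖q(t,x,·)‖_{B^α_{2,2}([j,j+1])} ≤ C exp(λ̃ (1 - (|x-j| - 1)²)/T)`. -/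
theorem besovNorm_qFun_bound (T Cσ Lσ β : ℝ) (σ : ℝ → ℝ → ℝ) (hT : 0 < T)
    (hβ₁ : 1 / 2 < β) (hβ₂ : β < 1)
    (hσ_meas : Measurable (Function.uncurry σ))
    (hσ_bdd : ∀ s ∈ Set.Icc (0 : ℝ) T, ∀ y : ℝ, |σ s y| ≤ Cσ)
    (hσ_hold : ∀ s ∈ Set.Icc (0 : ℝ) T, ∀ y₁ y₂ : ℝ, |σ s y₁ - σ s y₂| ≤ Lσ * |y₁ - y₂| ^ β)
    (α lam : ℝ) (hα₁ : 1 / 2 < α) (hα₂ : α < β) (hlam₁ : 0 < lam) (hlam₂ : lam < 1 / 4) :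
    ∃ C : ℝ, 0 < C ∧
      ∀ t ∈ Set.Icc (0 : ℝ) T, ∀ x : ℝ, ∀ j : ℤ,
        besovNorm α (fun y => qFun σ t x y) (j : ℝ) ((j : ℝ) + 1) ≤
          C * Real.exp (lam * (1 - (|x - j| - 1) ^ 2) / T) := by
  have hβ₀ : 0 < β := by linarith
  have hC : 0 ≤ Cσ := (abs_nonneg _).trans (hσ_bdd 0 ⟨le_rfl, hT.le⟩ 0)
  have hμ : 0 < 1 - 4 * lam := by linarith
  have hβ' : 0 < 1 - (1 + β) / 2 := by linarith
  obtain ⟨K₀, hK₀⟩ : ∃ K, K = Cσ * (T ^ (1 - 1 / 2 : ℝ) / (1 - 1 / 2)) := ⟨_, rfl⟩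
  obtain ⟨K₁, hK₁⟩ : ∃ K, K = Cσ * (2 + 1 / (1 - 4 * lam)) *
      (T ^ (1 - (1 + β) / 2) / (1 - (1 + β) / 2))
        + |Lσ| * (T ^ (1 - 1 / 2 : ℝ) / (1 - 1 / 2)) := ⟨_, rfl⟩
  have hhalf : (0 : ℝ) < 1 - 1 / 2 := by norm_num
  have hK₀0 : 0 ≤ K₀ := by rw [hK₀]; positivity
  have hK₁0 : 0 ≤ K₁ := by rw [hK₁]; positivity
  -- The summand `1` only serves to make the constant strictly positive.
  refine ⟨K₀ + K₁ * √(1 / (2 * (β - α))) + 1, by positivity, ?_⟩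
  intro t ht x j
  obtain ⟨d, hd⟩ : ∃ d, d = max (|x - j| - 1) 0 := ⟨_, rfl⟩
  have hd0 : 0 ≤ d := hd ▸ le_max_right _ _
  have hdy : ∀ y ∈ Set.Icc (j : ℝ) (j + 1), d ≤ |x - y| := by
    intro y hy
    rw [hd]
    refine max_le ?_ (abs_nonneg _)
    have h1 := abs_sub_le x y j
    have h2 : |y - j| ≤ 1 := abs_le.2 ⟨by linarith [hy.1], by linarith [hy.2]⟩
    linarith
  have hE : exp (-(lam * d ^ 2 / T)) ≤ exp (lam * (1 - (|x - j| - 1) ^ 2) / T) := by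
    apply exp_le_exp.2
    rw [← neg_div]
    apply div_le_div_of_nonneg_right _ hT.le
    rw [neg_eq_neg_one_mul, mul_left_comm]
    apply mul_le_mul_of_nonneg_left _ hlam₁.le
    rcases le_total 0 (|x - j| - 1) with h | h
    · rw [hd, max_eq_left h]; linarith
    · rw [hd, max_eq_right h]
      nlinarith [abs_nonneg (x - j)]
  obtain ⟨E, hEdef⟩ : ∃ E, E = exp (-(lam * d ^ 2 / T)) := ⟨_, rfl⟩
  have hE0 : 0 ≤ E := hEdef ▸ (exp_pos _).le
  have key := besovNorm_le_of_holder (g := fun y => qFun σ t x y) (c := (j : ℝ)) (α := α)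
    (M₀ := K₀ * E) (M₁ := K₁ * E) hβ₀ hα₂ (by positivity) (by positivity)
    (fun y hy => by
      rw [hK₀, hEdef]
      exact abs_qFun_le hσ_bdd hC hlam₁ hlam₂ ht.1 ht.2 hd0 (hdy y hy))
    (fun y₁ hy₁ y₂ hy₂ => by
      rw [hK₁, hEdef, mul_right_comm]
      exact abs_qFun_sub_le hσ_meas hσ_bdd hC hσ_hold hβ₀ hβ₂ hlam₁ hlam₂ ht.1 ht.2 hd0
        (hdy y₁ hy₁) (hdy y₂ hy₂))
  rw [← hEdef] at hE
  refine key.trans ?_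
  calc K₀ * E + K₁ * E * √(1 / (2 * (β - α)))
      ≤ (K₀ + K₁ * √(1 / (2 * (β - α))) + 1) * E := by linarith
    _ ≤ _ := by gcongr
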